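/- arXiv:2312.04544 — 3 statements merged into one kernel-verified Lean document; each statement's English description precedes it below -/
import Mathlib

section
/- Let A : ℝ → L(ℝ^d, ℝ^d), F : ℝ × ℝ^d → ℝ^d. Let H, g : (subsets of) ℝ × ℝ^d → ℝ^d both be totally differentiable at the relevant points, with partial derivatives D₁H, D₂H and D₁g, D₂g, and suppose g(t, H(t,x)) = x identically on an open neighborhood (in ℝ × ℝ^d) of the graph of the curve t ↦ g(t, v(t)) considered below. Define G̃(t,x) = D₁H(t, g(t,x)) + D₂H(t, g(t,x)) · [ A(t) g(t,x) + F(t, g(t,x)) ]. Suppose v : I → ℝ^d is differentiable with v′(t) = G̃(t, v(t)) for all t ∈ I. Then u(t) = g(t, v(t)) is differentiable on I and u′(t) = A(t)u(t) + F(t, u(t)) for all t ∈ I. -/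
/-!
Let `w = A(t) u(t) + F(t, u(t))`. Near `(t, u(t))` the map `(s, x) ↦ g(s, H(s, x))` is the
projection `(s, x) ↦ x`, so the chain rule and uniqueness of the derivative give
`Dg(t, v(t)) (τ, DH(t, u(t)) (τ, ξ)) = ξ` for every direction `(τ, ξ)`. In the direction `(1, w)`
the inner value `DH(t, u(t)) (1, w) = D₁H + D₂H · w` is exactly `v′(t)`, while the chain rule along
`s ↦ (s, v(s))` gives `u′(t) = Dg(t, v(t)) (1, v′(t))`. Hence `u′(t) = w`.
-/

/-- Euclidean space `ℝ^d`. -/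
abbrev Ed (d : ℕ) := EuclideanSpace ℝ (Fin d)

/-- (Step 8 of the elimination lemma.)  If `H` and `g` are totally
differentiable at the relevant points, `g(t, H(t,x)) = x` on an open neighborhood of
the graph of `t ↦ g(t,v(t))`, and `v` solves
`v′ = G̃(t,v) = D₁H(t,g(t,v)) + D₂H(t,g(t,v))·[A(t)g(t,v) + F(t,g(t,v))]` on `I`,
then `u(t) = g(t, v(t))` solves `u′ = A(t)u + F(t,u)` on `I`. -/
theorem pullback_of_solution
    (d : ℕ) (A : ℝ → Ed d →L[ℝ] Ed d) (F H g : ℝ → Ed d → Ed d)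
    (D₁H D₁g : ℝ → Ed d → Ed d)
    (D₂H D₂g : ℝ → Ed d → (Ed d →L[ℝ] Ed d))
    (I : Set ℝ) (v : ℝ → Ed d)
    (hginv : ∃ U : Set (ℝ × Ed d), IsOpen U ∧ (∀ t ∈ I, (t, g t (v t)) ∈ U) ∧
      ∀ p ∈ U, g p.1 (H p.1 p.2) = p.2)
    (hHg : ∀ t ∈ I, H t (g t (v t)) = v t)
    (hHdiff : ∀ t ∈ I,
      HasFDerivAt (fun p : ℝ × Ed d => H p.1 p.2)
        (((ContinuousLinearMap.fst ℝ ℝ (Ed d)).smulRight (D₁H t (g t (v t)))) +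
          (D₂H t (g t (v t))).comp (ContinuousLinearMap.snd ℝ ℝ (Ed d)))
        (t, g t (v t)))
    (hgdiff : ∀ t ∈ I,
      HasFDerivAt (fun p : ℝ × Ed d => g p.1 p.2)
        (((ContinuousLinearMap.fst ℝ ℝ (Ed d)).smulRight (D₁g t (v t))) +
          (D₂g t (v t)).comp (ContinuousLinearMap.snd ℝ ℝ (Ed d)))
        (t, v t))
    (hv : ∀ t ∈ I, HasDerivAt v
      (D₁H t (g t (v t)) +
        (D₂H t (g t (v t))) (A t (g t (v t)) + F t (g t (v t)))) t) :
    ∀ t ∈ I, HasDerivAt (fun τ => g τ (v τ))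
      (A t (g t (v t)) + F t (g t (v t))) t := by
  intro t ht
  obtain ⟨U, hUo, hU, hid⟩ := hginv
  have hg := hgdiff t ht
  have hu := hg.comp_hasDerivAt t ((hasDerivAt_id t).prodMk (hv t ht))
  have hpair := (hasFDerivAt_fst (𝕜 := ℝ) (p := (t, g t (v t)))).prodMk (hHdiff t ht)
  -- `hHg` identifies the base point `(t, H(t, u(t)))` with `(t, v(t))`, where `g` is differentiable.
  have hcomp := HasFDerivAt.comp (g := fun p : ℝ × Ed d => g p.1 p.2) (t, g t (v t))
    (by simpa only [hHg t ht] using hg) hpair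
  have hsnd := hcomp.congr_of_eventuallyEq
    (f₁ := (Prod.snd : ℝ × Ed d → Ed d)) (by
      filter_upwards [hUo.mem_nhds (hU t ht)] with p hp
      exact (hid p hp).symm)
  have key := DFunLike.congr_fun (hsnd.unique hasFDerivAt_snd)
    ((1 : ℝ), A t (g t (v t)) + F t (g t (v t)))
  refine hu.congr_deriv ?_
  simpa using key
end

section
/- Let E be a Banach space, ρ > 0, C, L ≥ 0 and κ ≥ 2 a real number. Let h : {x ∈ E : ‖x‖ ≤ 2ρ} → E satisfy h(0) = 0, ‖h(x)‖ ≤ C‖x‖^κ for all ‖x‖ ≤ 2ρ, ‖h(x) − h(y)‖ ≤ (1/2)‖x − y‖ for all ‖x‖, ‖y‖ ≤ 2ρ, and the refined Lipschitz bound ‖h(x) − h(y)‖ ≤ L·max(‖x‖, ‖y‖)^{κ−1}·‖x − y‖ for all ‖x‖, ‖y‖ ≤ 2ρ. For ‖x‖ ≤ ρ let y = H⁻¹(x) be the unique point with ‖y‖ ≤ 2ρ and y + h(y) = x. Then the remainder ϑ(x) := H⁻¹(x) − x + h(x) satisfies ‖ϑ(x)‖ ≤ L·C·2^{2κ−1}·‖x‖^{2κ−1}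 for all ‖x‖ ≤ ρ. In particular ‖H⁻¹(x) − x + h(x)‖/‖x‖^{κ} → 0 as x → 0. -/
/-!
Since `y + h y = x`, the remainder is `y - x + h x = h x - h y`, while `x - y = h y`. The
`1/2`-Lipschitz bound gives `‖h y‖ ≤ ‖y‖ / 2`, hence `‖y‖ ≤ 2‖x‖`. The refined Lipschitz bound then
yields `‖h x - h y‖ ≤ L (2‖x‖)^(κ-1) ‖h y‖ ≤ L (2‖x‖)^(κ-1) C (2‖x‖)^κ`.
The little-o statement follows because `2κ - 1 = (κ - 1) + κ` and `κ - 1 ≥ 1`.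
-/

/-- Quantitative expansion of the inverse `H⁻¹ = id − h + ϑ`:
under the stated bounds on `h`, every solution `y` of `y + h(y) = x` with `‖y‖ ≤ 2ρ`,
`‖x‖ ≤ ρ` satisfies `‖y − x + h(x)‖ ≤ L·C·2^{2κ−1}‖x‖^{2κ−1}`; in particular
`‖H⁻¹(x) − x + h(x)‖/‖x‖^κ → 0` as `x → 0`. -/
theorem inverse_expansion_remainder
    (E : Type*) [NormedAddCommGroup E] [NormedSpace ℝ E] [CompleteSpace E]
    (ρ C L κ : ℝ) (hρ : 0 < ρ) (hC : 0 ≤ C) (hL : 0 ≤ L) (hκ : 2 ≤ κ)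
    (h : E → E) (h0 : h 0 = 0)
    (hbd : ∀ x : E, ‖x‖ ≤ 2 * ρ → ‖h x‖ ≤ C * ‖x‖ ^ κ)
    (hlip : ∀ x y : E, ‖x‖ ≤ 2 * ρ → ‖y‖ ≤ 2 * ρ →
      ‖h x - h y‖ ≤ (1 / 2) * ‖x - y‖)
    (hlip' : ∀ x y : E, ‖x‖ ≤ 2 * ρ → ‖y‖ ≤ 2 * ρ →
      ‖h x - h y‖ ≤ L * max ‖x‖ ‖y‖ ^ (κ - 1) * ‖x - y‖) :
    (∀ x y : E, ‖x‖ ≤ ρ → ‖y‖ ≤ 2 * ρ → y + h y = x →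
      ‖y - x + h x‖ ≤ L * C * 2 ^ (2 * κ - 1) * ‖x‖ ^ (2 * κ - 1)) ∧
    (∀ ε : ℝ, 0 < ε → ∃ δ : ℝ, 0 < δ ∧
      ∀ x y : E, x ≠ 0 → ‖x‖ ≤ δ → ‖x‖ ≤ ρ → ‖y‖ ≤ 2 * ρ → y + h y = x →
        ‖y - x + h x‖ ≤ ε * ‖x‖ ^ κ) := by
  have key : ∀ x y : E, ‖x‖ ≤ ρ → ‖y‖ ≤ 2 * ρ → y + h y = x →
      ‖y - x + h x‖ ≤ L * C * 2 ^ (2 * κ - 1) * ‖x‖ ^ (2 * κ - 1) := by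
    intro x y hx hy hxy
    have hx' : ‖x‖ ≤ 2 * ρ := by linarith
    have hrem : y - x + h x = h x - h y := by rw [← hxy]; abel
    have hdiff : x - y = h y := by rw [← hxy]; abel
    have hhalf : ‖h y‖ ≤ 1 / 2 * ‖y‖ := by
      simpa [h0] using hlip y 0 hy (by simpa using hρ.le)
    have hy2 : ‖y‖ ≤ 2 * ‖x‖ := by
      have htri : ‖y‖ ≤ ‖x‖ + ‖h y‖ := by
        have := norm_sub_le x (h y)
        rwa [← hdiff, sub_sub_cancel, hdiff] at this
      linarith
    have hx0 := norm_nonneg x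
    have hmax : max ‖x‖ ‖y‖ ≤ 2 * ‖x‖ := max_le (by linarith) hy2
    have h1 : max ‖x‖ ‖y‖ ^ (κ - 1) ≤ (2 * ‖x‖) ^ (κ - 1) :=
      Real.rpow_le_rpow (le_max_of_le_left hx0) hmax (by linarith)
    have h2 : ‖y‖ ^ κ ≤ (2 * ‖x‖) ^ κ :=
      Real.rpow_le_rpow (norm_nonneg y) hy2 (by linarith)
    calc ‖y - x + h x‖ = ‖h x - h y‖ := by rw [hrem]
      _ ≤ L * max ‖x‖ ‖y‖ ^ (κ - 1) * ‖h y‖ := by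
        simpa only [hdiff] using hlip' x y hx' hy
      _ ≤ L * (2 * ‖x‖) ^ (κ - 1) * (C * (2 * ‖x‖) ^ κ) := by
        have h3 : ‖h y‖ ≤ C * (2 * ‖x‖) ^ κ :=
          (hbd y hy).trans (mul_le_mul_of_nonneg_left h2 hC)
        gcongr
      _ = L * C * (2 * ‖x‖) ^ (2 * κ - 1) := by
        rw [show 2 * κ - 1 = (κ - 1) + κ by ring,
          Real.rpow_add_of_nonneg (by positivity) (by linarith) (by linarith)]
        ring
      _ = L * C * 2 ^ (2 * κ - 1) * ‖x‖ ^ (2 * κ - 1) := by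
        rw [Real.mul_rpow (by norm_num) hx0]
        ring
  refine ⟨key, fun ε hε => ?_⟩
  set K : ℝ := L * C * 2 ^ (2 * κ - 1) with hK
  have hK0 : 0 ≤ K := by positivity
  -- `K + 1` rather than `K` in the denominator, since `K` may vanish.
  refine ⟨min 1 (ε / (K + 1)), by positivity, fun x y _ hxδ hx hy hxy => ?_⟩
  have hx0 := norm_nonneg x
  have hx1 : ‖x‖ ≤ 1 := hxδ.trans (min_le_left _ _)
  have hxε : ‖x‖ * (K + 1) ≤ ε :=
    (le_div_iff₀ (by positivity)).1 (hxδ.trans (min_le_right _ _))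
  have hpow : ‖x‖ ^ (κ - 1) ≤ ‖x‖ := by
    simpa using Real.rpow_le_rpow_of_exponent_ge_of_imp hx0 hx1
      (show (1 : ℝ) ≤ κ - 1 by linarith) (fun _ h => absurd h (by linarith))
  calc ‖y - x + h x‖ ≤ K * ‖x‖ ^ (2 * κ - 1) := key x y hx hy hxy
    _ = K * ‖x‖ ^ (κ - 1) * ‖x‖ ^ κ := by
      rw [show 2 * κ - 1 = (κ - 1) + κ by ring,
        Real.rpow_add_of_nonneg hx0 (by linarith) (by linarith)]
      ring
    _ ≤ ε * ‖x‖ ^ κ := by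
      have : K * ‖x‖ ^ (κ - 1) ≤ ε :=
        (mul_le_mul_of_nonneg_left hpow hK0).trans (by linarith)
      gcongr
end

section
/- Let μ be a growth rate, n ∈ ℕ, k = (k_1,…,k_n) ∈ ℕ₀ⁿ, and real constants β > 0, ν ≥ 0 with β − ν > 0, α_1,…,α_n < 0, and θ_1,…,θ_n ≥ 0. Then for every t ∈ ℝ the quantity η⁺(t) := sup_{s ≥ t} (μ(t)/μ(s))^{β − (k_1α_1 + ⋯ + k_nα_n)} · μ(s)^{sgn(s)·ν} · μ(t)^{sgn(t)·(k_1θ_1 + ⋯ + k_nθ_n)} is finite. -/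
/-!
Write `E = β - ∑ kᵢ αᵢ`; since `αᵢ < 0` and `ν < β`, we have `E > ν`, so every exponent
`p ∈ {-ν, 0, ν}` taken by `sgn(s) ν` satisfies `p ≤ E`. As `μ t ≤ μ s` for `t ≤ s`,
`(μ t / μ s) ^ E ≤ (μ t / μ s) ^ p`, hence `(μ t / μ s) ^ E * μ s ^ p ≤ μ t ^ p`
(`div_rpow_mul_rpow_le`). Only three values of `p` occur, so the right-hand side is bounded
independently of `s`, by `μ t ^ (-ν) + 1 + μ t ^ ν`; the remaining factor does not involve `s`.
-/

/-- A growth rate: a positive, strictly increasing function `μ : ℝ → (0,∞)` with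
`μ(0) = 1`, `μ(t) → +∞` as `t → +∞` and `μ(t) → 0` as `t → −∞`. -/
def IsGrowthRate (μ : ℝ → ℝ) : Prop :=
  (∀ t, 0 < μ t) ∧ StrictMono μ ∧ μ 0 = 1 ∧
    Filter.Tendsto μ Filter.atTop Filter.atTop ∧
    Filter.Tendsto μ Filter.atBot (nhds 0)

theorem div_rpow_mul_rpow_le {a b E p : ℝ} (ha : 0 < a) (hab : a ≤ b) (hp : p ≤ E) :
    (a / b) ^ E * b ^ p ≤ a ^ p := by
  have hb : 0 < b := ha.trans_le hab
  calc (a / b) ^ E * b ^ p ≤ (a / b) ^ p * b ^ p := by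
        gcongr ?_ * _
        exact Real.rpow_le_rpow_of_exponent_ge (div_pos ha hb) ((div_le_one hb).2 hab) hp
    _ = a ^ p := by
        rw [← Real.mul_rpow (div_pos ha hb).le hb.le, div_mul_cancel₀ _ hb.ne']

/-- With `β > 0`, `ν ≥ 0`, `β − ν > 0`, `αᵢ < 0`, `θᵢ ≥ 0`, for every
`t` the quantity
`η⁺(t) = sup_{s ≥ t} (μ(t)/μ(s))^{β − Σkᵢαᵢ} μ(s)^{sgn(s)ν} μ(t)^{sgn(t)Σkᵢθᵢ}`
is finite. -/
theorem eta_plus_finite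
    (μ : ℝ → ℝ) (hμ : IsGrowthRate μ)
    (n : ℕ) (k : Fin n → ℕ) (β ν : ℝ) (α θ : Fin n → ℝ)
    (hβ : 0 < β) (hν : 0 ≤ ν) (hβν : 0 < β - ν)
    (hα : ∀ i, α i < 0) (hθ : ∀ i, 0 ≤ θ i) (t : ℝ) :
    ∃ C : ℝ, ∀ s : ℝ, t ≤ s →
      (μ t / μ s) ^ (β - ∑ i, (k i : ℝ) * α i) *
          μ s ^ (Real.sign s * ν) *
          μ t ^ (Real.sign t * ∑ i, (k i : ℝ) * θ i) ≤ C := by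
  obtain ⟨hpos, hmono, -⟩ := hμ
  have hsum : ∑ i, (k i : ℝ) * α i ≤ 0 :=
    Finset.sum_nonpos fun i _ => mul_nonpos_of_nonneg_of_nonpos (Nat.cast_nonneg _) (hα i).le
  refine ⟨(μ t ^ (-ν) + 1 + μ t ^ ν) * μ t ^ (Real.sign t * ∑ i, (k i : ℝ) * θ i),
    fun s hs => ?_⟩
  refine mul_le_mul_of_nonneg_right ?_ (Real.rpow_nonneg (hpos t).le _)
  have hneg : 0 < μ t ^ (-ν) := Real.rpow_pos_of_pos (hpos t) _
  have hnn : 0 < μ t ^ ν := Real.rpow_pos_of_pos (hpos t) _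
  have key : ∀ p : ℝ, p ≤ ν →
      (μ t / μ s) ^ (β - ∑ i, (k i : ℝ) * α i) * μ s ^ p ≤ μ t ^ p := fun p hp =>
    div_rpow_mul_rpow_le (hpos t) (hmono.monotone hs) (by linarith)
  rcases Real.sign_apply_eq s with h | h | h <;> rw [h]
  · rw [neg_one_mul]
    linarith [key (-ν) (by linarith)]
  · rw [zero_mul]
    have h0 := key 0 hν
    rw [Real.rpow_zero (μ t)] at h0
    linarith
  · rw [one_mul]
    linarith [key ν le_rfl]
end
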